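/- Let f : ℝ → ℝ be infinitely differentiable on a neighborhood of 0 with f(0) = 1, and set a_k = f^(k)(0)/k! for k ≥ 0 and c_k = g^(k)(0)/k! for k ≥ 1, where g = log ∘ f. Suppose every a_k is positive and the sequence (a_k) is log-convex, i.e. a_k·a_{k−2} ≥ a_{k−1}² for all k ≥ 2. Then for every k ≥ 1: k·c_k ≥ a_k + (k−1)·(a_k/a_{k−1} − a_1)·c_{k−1} > 0. In particular, all derivatives of log f at 0 are positive, i.e. f is log-absolutely monotonic at 0. -/

import Mathlib

/-!
Write `a k` for the Taylor coefficients of `f`, `d k = (k + 1) * c (k + 1)` for those of the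
logarithmic derivative `f' / f`, and `r = a (n + 2) / a (n + 1)`. Comparing coefficients in
`(f' / f) * f = f'` gives `∑_{i + j = n} d i * a j = (n + 1) * a (n + 1)`. Subtracting `r` times
this identity from the one at `n + 1` cancels everything on the right except `a (n + 2)`:
`a 0 * d (n + 1) = a (n + 2) + ∑_{i + j = n} d i * (r * a j - a (j + 1))`.
By log-convexity the ratios `a (j + 1) / a j` increase, so once `d 0, …, d n` are known to be
positive every summand is nonnegative. Keeping only the summand `j = 0` yields the lower bound,
which is itself positive, and the induction continues.
-/

open Finset Filter Topology
open scoped Nat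

section TaylorCoeff

variable {𝕜 : Type*} [NontriviallyNormedField 𝕜]

/-- The `k`-th Taylor coefficient of `f` at `x`, that is, `f⁽ᵏ⁾(x) / k!`. It has the junk values of
`iteratedDeriv` where `f` is not sufficiently smooth. -/
noncomputable def taylorCoeff (f : 𝕜 → 𝕜) (x : 𝕜) (k : ℕ) : 𝕜 :=
  iteratedDeriv k f x / k !

variable {f g : 𝕜 → 𝕜} {x : 𝕜} {n : ℕ}

theorem taylorCoeff_zero : taylorCoeff f x 0 = f x := by
  simp [taylorCoeff]

theorem taylorCoeff_congr (h : f =ᶠ[𝓝 x] g) (n : ℕ) :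
    taylorCoeff f x n = taylorCoeff g x n := by
  rw [taylorCoeff, taylorCoeff, h.iteratedDeriv_eq]

theorem deriv_eventuallyEq_logDeriv_mul (hf : ContinuousAt f x) (hx : f x ≠ 0) :
    deriv f =ᶠ[𝓝 x] logDeriv f * f := by
  filter_upwards [hf.eventually_ne hx] with y hy
  exact (div_mul_cancel₀ (deriv f y) hy).symm

theorem contDiffAt_logDeriv (hf : ContDiffAt 𝕜 (n + 1) f x) (hx : f x ≠ 0) :
    ContDiffAt 𝕜 n (logDeriv f) x :=
  (hf.derivWithin le_rfl).div (hf.of_le le_self_add) hx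

variable [CharZero 𝕜]

theorem taylorCoeff_deriv (f : 𝕜 → 𝕜) (x : 𝕜) (n : ℕ) :
    taylorCoeff (deriv f) x n = (n + 1) * taylorCoeff f x (n + 1) := by
  have : (n + 1 : 𝕜) ≠ 0 := n.cast_add_one_ne_zero
  rw [taylorCoeff, taylorCoeff, iteratedDeriv_succ', Nat.factorial_succ]
  push_cast
  field_simp

theorem taylorCoeff_mul (hf : ContDiffAt 𝕜 n f x) (hg : ContDiffAt 𝕜 n g x) :
    taylorCoeff (f * g) x n =
      ∑ p ∈ antidiagonal n, taylorCoeff f x p.1 * taylorCoeff g x p.2 := by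
  rw [taylorCoeff, iteratedDeriv_mul hf hg, sum_div,
    Nat.sum_antidiagonal_eq_sum_range_succ fun i j => taylorCoeff f x i * taylorCoeff g x j]
  refine sum_congr rfl fun i hi => ?_
  have hn : (n ! : 𝕜) ≠ 0 := Nat.cast_ne_zero.2 n.factorial_ne_zero
  rw [Nat.cast_choose 𝕜 (mem_range_succ_iff.1 hi), taylorCoeff, taylorCoeff]
  field_simp

theorem sum_taylorCoeff_logDeriv_mul (hf : ContDiffAt 𝕜 (n + 1) f x) (hx : f x ≠ 0) :
    ∑ p ∈ antidiagonal n, taylorCoeff (logDeriv f) x p.1 * taylorCoeff f x p.2 =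
      (n + 1) * taylorCoeff f x (n + 1) := by
  rw [← taylorCoeff_mul (contDiffAt_logDeriv hf hx) (hf.of_le le_self_add), ← taylorCoeff_deriv]
  exact (taylorCoeff_congr
    (deriv_eventuallyEq_logDeriv_mul hf.continuousAt hx) n).symm

end TaylorCoeff

theorem taylorCoeff_logDeriv_eq_mul_taylorCoeff_log {f : ℝ → ℝ} {x : ℝ}
    (hf : ContDiffAt ℝ 1 f x) (hx : f x ≠ 0) (n : ℕ) :
    taylorCoeff (logDeriv f) x n =
      (n + 1) * taylorCoeff (fun y => Real.log (f y)) x (n + 1) := by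
  have hlog : logDeriv f =ᶠ[𝓝 x] deriv fun y => Real.log (f y) := by
    filter_upwards [hf.eventually (by decide), hf.continuousAt.eventually_ne hx] with y hy hy0
    exact (Real.deriv_log_comp_eq_logDeriv (hy.differentiableAt one_ne_zero) hy0).symm
  rw [taylorCoeff_congr hlog, taylorCoeff_deriv]

theorem mul_succ_eq_add_sum_of_recurrence {K : Type*} [Field K] {a d : ℕ → K} {n : ℕ}
    (ha : a (n + 1) ≠ 0)
    (hn : ∑ p ∈ antidiagonal n, d p.1 * a p.2 = (n + 1 : ℕ) * a (n + 1))
    (hn' : ∑ p ∈ antidiagonal (n + 1), d p.1 * a p.2 = (n + 2 : ℕ) * a (n + 2)) :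
    a 0 * d (n + 1) = a (n + 2) +
      ∑ p ∈ antidiagonal n, d p.1 * (a (n + 2) / a (n + 1) * a p.2 - a (p.2 + 1)) := by
  set r := a (n + 2) / a (n + 1)
  have hr : r * a (n + 1) = a (n + 2) := div_mul_cancel₀ _ ha
  have hsum : ∑ p ∈ antidiagonal n, d p.1 * (r * a p.2 - a (p.2 + 1)) =
      r * ∑ p ∈ antidiagonal n, d p.1 * a p.2 - ∑ p ∈ antidiagonal n, d p.1 * a (p.2 + 1) := by
    rw [mul_sum, ← sum_sub_distrib]
    exact sum_congr rfl fun p _ => by ring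
  rw [Nat.sum_antidiagonal_succ'] at hn'
  rw [hsum, hn]
  push_cast at hn' ⊢
  linear_combination hn' - (n + 1) * hr

section LogConvex

variable {K : Type*} [Field K] [LinearOrder K] [IsStrictOrderedRing K] {a d : ℕ → K} {n N : ℕ}

theorem monotoneOn_succ_div_of_sq_le_mul (hpos : ∀ k < N, 0 < a k)
    (hconv : ∀ k, k + 2 ≤ N → a (k + 1) ^ 2 ≤ a (k + 2) * a k) :
    MonotoneOn (fun k => a (k + 1) / a k) (Set.Iio N) := by
  refine monotoneOn_of_le_add_one Set.ordConnected_Iio fun k _ hk hk' => ?_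
  rw [div_le_div_iff₀ (hpos k hk) (hpos (k + 1) hk'), ← sq]
  exact hconv k hk'

theorem add_mul_le_mul_succ_of_recurrence (hpos : ∀ k ≤ n + 1, 0 < a k)
    (hratio : MonotoneOn (fun k => a (k + 1) / a k) (Set.Iio (n + 2)))
    (hn : ∑ p ∈ antidiagonal n, d p.1 * a p.2 = (n + 1 : ℕ) * a (n + 1))
    (hn' : ∑ p ∈ antidiagonal (n + 1), d p.1 * a p.2 = (n + 2 : ℕ) * a (n + 2))
    (hd : ∀ k ≤ n, 0 ≤ d k) :
    a (n + 2) + (a (n + 2) / a (n + 1) * a 0 - a 1) * d n ≤ a 0 * d (n + 1) := by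
  rw [mul_succ_eq_add_sum_of_recurrence (hpos _ le_rfl).ne' hn hn', mul_comm _ (d n)]
  gcongr
  refine single_le_sum (f := fun p : ℕ × ℕ => d p.1 * (_ * a p.2 - a (p.2 + 1)))
    (fun p hp => ?_) (a := (n, 0)) (mem_antidiagonal.2 (add_zero n))
  have hpn : p.1 + p.2 = n := mem_antidiagonal.1 hp
  have hle : a (p.2 + 1) / a p.2 ≤ a (n + 2) / a (n + 1) :=
    hratio (Set.mem_Iio.2 (by lia)) (Set.mem_Iio.2 (by lia)) (by lia)
  exact mul_nonneg (hd _ (by lia))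
    (sub_nonneg.2 ((div_le_iff₀ (hpos _ (by lia))).1 hle))

theorem add_mul_pos_of_monotoneOn_succ_div (ha₀ : 0 < a 0) (ha : 0 < a (n + 2))
    (hratio : MonotoneOn (fun k => a (k + 1) / a k) (Set.Iio (n + 2))) (hd : 0 ≤ d n) :
    0 < a (n + 2) + (a (n + 2) / a (n + 1) * a 0 - a 1) * d n := by
  have hle : a 1 / a 0 ≤ a (n + 2) / a (n + 1) :=
    hratio (Set.mem_Iio.2 (by lia)) (Set.mem_Iio.2 (by lia)) (Nat.zero_le (n + 1))
  rw [div_le_iff₀ ha₀] at hle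
  exact add_pos_of_pos_of_nonneg ha (mul_nonneg (sub_nonneg.2 hle) hd)

theorem pos_of_recurrence_of_monotoneOn_succ_div (hpos : ∀ k ≤ N, 0 < a k)
    (hratio : MonotoneOn (fun k => a (k + 1) / a k) (Set.Iio N))
    (hrec : ∀ n < N, ∑ p ∈ antidiagonal n, d p.1 * a p.2 = (n + 1 : ℕ) * a (n + 1)) :
    ∀ n < N, 0 < d n := by
  intro n hn
  have ha₀ : 0 < a 0 := hpos 0 (Nat.zero_le N)
  induction n using Nat.strong_induction_on with
  | _ n ih =>
    rcases n with _ | n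
    · have h₀ : d 0 * a 0 = a 1 := by simpa using hrec 0 hn
      exact pos_of_mul_pos_left (h₀ ▸ hpos 1 hn) ha₀.le
    · have hd : ∀ k ≤ n, 0 ≤ d k := fun k hk => (ih k (by lia) (by lia)).le
      have hratio' := hratio.mono (Set.Iio_subset_Iio (show n + 2 ≤ N from hn))
      have hlower := add_mul_pos_of_monotoneOn_succ_div ha₀ (hpos (n + 2) hn) hratio'
        (hd n le_rfl)
      exact pos_of_mul_pos_right (hlower.trans_le (add_mul_le_mul_succ_of_recurrence
        (fun k hk => hpos k (by lia)) hratio' (hrec n (by lia)) (hrec (n + 1) hn) hd)) ha₀.le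

end LogConvex

theorem log_abs_monotonic_criterion_general {f : ℝ → ℝ} {x : ℝ} {k : ℕ} (hk : 1 ≤ k)
    (hf : ContDiffAt ℝ k f x) (hpos : ∀ j ≤ k, 0 < taylorCoeff f x j)
    (hconv : ∀ j, j + 2 ≤ k →
      taylorCoeff f x (j + 1) ^ 2 ≤ taylorCoeff f x (j + 2) * taylorCoeff f x j) :
    let a := taylorCoeff f x
    let c := taylorCoeff (fun y => Real.log (f y)) x
    a k + (k - 1) * (a k / a (k - 1) * a 0 - a 1) * c (k - 1) ≤ a 0 * (k * c k) ∧
      0 < a k + (k - 1) * (a k / a (k - 1) * a 0 - a 1) * c (k - 1) ∧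
      0 < c k := by
  intro a c
  set d := taylorCoeff (logDeriv f) x
  have hx : f x ≠ 0 := by simpa only [taylorCoeff_zero] using (hpos 0 (Nat.zero_le k)).ne'
  have hdc : ∀ n, d n = (n + 1) * c (n + 1) :=
    taylorCoeff_logDeriv_eq_mul_taylorCoeff_log (hf.of_le (mod_cast hk)) hx
  have hrec : ∀ n < k, ∑ p ∈ antidiagonal n, d p.1 * a p.2 = (n + 1 : ℕ) * a (n + 1) :=
    fun n hn => mod_cast sum_taylorCoeff_logDeriv_mul (hf.of_le (mod_cast hn)) hx
  have hratio := monotoneOn_succ_div_of_sq_le_mul (fun j hj => hpos j hj.le) hconv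
  have hd := pos_of_recurrence_of_monotoneOn_succ_div hpos hratio hrec
  have hc : ∀ n < k, 0 < c (n + 1) := fun n hn =>
    pos_of_mul_pos_right (hdc n ▸ hd n hn) n.cast_add_one_pos.le
  obtain _ | _ | n := k
  · contradiction
  · have h₀ : c 1 * a 0 = a 1 := by simpa [hdc] using hrec 0 one_pos
    have ha₁ : 0 < a 1 := hpos 1 le_rfl
    simpa [← h₀, mul_comm, hc 0 one_pos] using ha₁
  · have hle := add_mul_le_mul_succ_of_recurrence (fun k hk => hpos k (by lia)) hratio
      (hrec n (by lia)) (hrec (n + 1) (by lia)) fun k hk => (hd k (by lia)).le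
    have hlower := add_mul_pos_of_monotoneOn_succ_div (hpos 0 (Nat.zero_le _)) (hpos _ le_rfl)
      hratio (hd n (by lia)).le
    refine ⟨?_, ?_, hc (n + 1) (by lia)⟩
    · simpa [hdc, mul_assoc, mul_left_comm] using hle
    · simpa [hdc, mul_assoc, mul_left_comm] using hlower

theorem log_abs_monotonic_criterion (f : ℝ → ℝ)
    (hf : ContDiffAt ℝ (⊤ : ℕ∞) f 0) (hf0 : f 0 = 1)
    (a c : ℕ → ℝ)
    (ha : ∀ k : ℕ, a k = iteratedDeriv k f 0 / Nat.factorial k)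
    (hc : ∀ k : ℕ, c k = iteratedDeriv k (fun x => Real.log (f x)) 0 / Nat.factorial k)
    (hapos : ∀ k : ℕ, 0 < a k)
    (hlogconvex : ∀ k : ℕ, 2 ≤ k → a (k - 1) ^ 2 ≤ a k * a (k - 2)) :
    ∀ k : ℕ, 1 ≤ k →
      (a k + (k - 1 : ℝ) * (a k / a (k - 1) - a 1) * c (k - 1) ≤ k * c k ∧
       0 < a k + (k - 1 : ℝ) * (a k / a (k - 1) - a 1) * c (k - 1) ∧
       0 < c k) := by
  intro k hk
  obtain rfl : a = taylorCoeff f 0 := funext ha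
  obtain rfl : c = taylorCoeff (fun x => Real.log (f x)) 0 := funext hc
  simpa [taylorCoeff_zero, hf0] using log_abs_monotonic_criterion_general hk
    (hf.of_le (mod_cast le_top)) (fun j _ => hapos j) fun j _ => hlogconvex (j + 2) (by lia)
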